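/- arXiv:1906.00135 — 5 statements merged into one kernel-verified Lean document; each statement's English description precedes it below -/
import Mathlib

section
/- Let G be a finite simple graph with γ_{1/2}(G) = 1. Then for every integer m ≥ 2, γ_{1/2}(G □ P_m) ≥ γ_{1/2}(P_m). -/
/-!
If `S` is a `p`-dominating set of `G □ H`, then so is its projection to `H`, and projecting does not
increase cardinality. Indeed the projection sends equal-or-adjacent vertices of `G □ H` to
equal-or-adjacent vertices of `H`, so `N[S] ⊆ V × N[π S]` and `p |V| |H| ≤ |N[S]| ≤ |V| |N[π S]|`;
divide by `|V|`. The hypothesis `γ_{1/2}(G) = 1` ensures `|V| > 0`: on the empty graph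
the empty set is dominating, so its domination number is `0`.
-/

open SimpleGraph

/-- The closed neighborhood `N[S]` of a set of vertices `S`:
all vertices equal or adjacent to some vertex of `S`. -/
def closedNbhd {V : Type*} (G : SimpleGraph V) (S : Set V) : Set V :=
  {w | ∃ u ∈ S, w = u ∨ G.Adj u w}

/-- `S` is a `p`-dominating set of `G` if `N[S]` contains at least a proportion `p`
of the vertices. -/
def IsPDomSet {V : Type*} [Fintype V] (G : SimpleGraph V) (p : ℝ) (S : Set V) : Prop :=
  p * (Fintype.card V : ℝ) ≤ ((closedNbhd G S).ncard : ℝ)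

/-- The `p`-domination number `γ_p(G)`: the minimum cardinality of a `p`-dominating set. -/
noncomputable def pDomNum {V : Type*} [Fintype V] (G : SimpleGraph V) (p : ℝ) : ℕ :=
  sInf {k : ℕ | ∃ S : Set V, IsPDomSet G p S ∧ S.ncard = k}

/-- `S` is a `γ_p`-set: a `p`-dominating set of minimum cardinality `γ_p(G)`. -/
def IsGammaPSet {V : Type*} [Fintype V] (G : SimpleGraph V) (p : ℝ) (S : Set V) : Prop :=
  IsPDomSet G p S ∧ S.ncard = pDomNum G p

/-- `v` belongs to the `p`-influencing set of `G`, i.e. the union of all `γ_p`-sets. -/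
def InInfluence {V : Type*} [Fintype V] (G : SimpleGraph V) (p : ℝ) (v : V) : Prop :=
  ∃ S : Set V, IsGammaPSet G p S ∧ v ∈ S

theorem closedNbhd_boxProd_subset {V W : Type*} (G : SimpleGraph V) (H : SimpleGraph W)
    (S : Set (V × W)) :
    closedNbhd (G □ H) S ⊆ (Set.univ : Set V) ×ˢ closedNbhd H (Prod.snd '' S) := by
  rintro ⟨v, w⟩ ⟨u, hu, h⟩
  refine ⟨trivial, u.2, ⟨u, hu, rfl⟩, ?_⟩
  rcases h with rfl | h
  · exact Or.inl rfl
  · rcases SimpleGraph.boxProd_adj.1 h with h | h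
    · exact Or.inl h.2.symm
    · exact Or.inr h.1

theorem IsPDomSet.snd_image {V W : Type*} [Fintype V] [Fintype W] [Nonempty V]
    {G : SimpleGraph V} {H : SimpleGraph W} {p : ℝ} {S : Set (V × W)}
    (hS : IsPDomSet (G □ H) p S) : IsPDomSet H p (Prod.snd '' S) := by
  unfold IsPDomSet at *
  have hle : (closedNbhd (G □ H) S).ncard
      ≤ Fintype.card V * (closedNbhd H (Prod.snd '' S)).ncard := by
    have h := Set.ncard_le_ncard (closedNbhd_boxProd_subset G H S) (Set.toFinite _)
    rwa [Set.ncard_prod, Set.ncard_univ, Nat.card_eq_fintype_card] at h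
  have hle' : ((closedNbhd (G □ H) S).ncard : ℝ)
      ≤ Fintype.card V * ((closedNbhd H (Prod.snd '' S)).ncard : ℝ) := by exact_mod_cast hle
  have hpos : (0 : ℝ) < Fintype.card V := by exact_mod_cast Fintype.card_pos
  rw [Fintype.card_prod, Nat.cast_mul] at hS
  refine le_of_mul_le_mul_left ?_ hpos
  linarith

/-- For `p ≤ 1` a `p`-dominating set exists (all vertices), so the infimum defining `pDomNum`
is attained. -/
theorem exists_isGammaPSet {V : Type*} [Fintype V] (G : SimpleGraph V) {p : ℝ} (hp : p ≤ 1) :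
    ∃ S : Set V, IsGammaPSet G p S := by
  have hne : {k : ℕ | ∃ S : Set V, IsPDomSet G p S ∧ S.ncard = k}.Nonempty := by
    refine ⟨_, Set.univ, ?_, rfl⟩
    have huniv : closedNbhd G Set.univ = Set.univ :=
      Set.eq_univ_of_forall fun v => ⟨v, trivial, Or.inl rfl⟩
    unfold IsPDomSet
    rw [huniv, Set.ncard_univ, Nat.card_eq_fintype_card]
    exact mul_le_of_le_one_left (Nat.cast_nonneg _) hp
  exact Nat.sInf_mem hne

theorem stmt4 {V : Type*} [Fintype V] (G : SimpleGraph V)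
    (hG : pDomNum G (1/2) = 1) (m : ℕ) (hm : 2 ≤ m) :
    pDomNum (pathGraph m) (1/2) ≤ pDomNum (G □ pathGraph m) (1/2) := by
  have hV : Nonempty V := by
    by_contra h
    rw [not_nonempty_iff] at h
    have h0 : pDomNum G (1/2) ≤ 0 :=
      Nat.sInf_le ⟨∅, by simp [IsPDomSet], Set.ncard_empty V⟩
    omega
  obtain ⟨S, hS, hcard⟩ := exists_isGammaPSet (G □ pathGraph m) (p := 1/2) (by norm_num)
  rw [← hcard]
  have hproj : pDomNum (pathGraph m) (1/2) ≤ (Prod.snd '' S).ncard :=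
    Nat.sInf_le ⟨_, hS.snd_image, rfl⟩
  exact hproj.trans (Set.ncard_image_le (Set.toFinite S))
end

section
/- Let G be a connected finite simple graph with γ_{1/2}(G) = 3. Then for every integer m ≥ 2, γ_{1/2}(G □ P_m) ≥ 3·γ_{1/2}(P_m). -/
/-!
A union bound suffices. Write `n = |V|`. As `γ_{1/2}(G) = 3`, two vertices of `G` dominate fewer
than `n / 2` vertices. Every closed neighbourhood `N[u]` misses some vertex `v`, and
`N[u] ∪ {v} ⊆ N[{u, v}]`, so `2 |N[u]| + 3 ≤ n` (`two_mul_nbhd_add_three_le`).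
A vertex `(u, i)` of `G □ P_m` dominates `|N[u]| + deg i` vertices, hence at most `(n + 1) / 2`, and
at most `(n - 1) / 2` when `m = 2`. So a half-dominating set of size `s` satisfies
`m n ≤ s (n + 1)`, respectively `2 n ≤ s (n - 1)` when `m = 2`.
Since `γ_{1/2}(P_m) ≤ ⌈m / 6⌉` (`pDomNum_pathGraph_le`) and `n ≥ 5`, this gives
`s ≥ 3 ⌈m / 6⌉`.
-/

open SimpleGraph

lemma isPDomSet_half_iff {V : Type*} [Fintype V] (G : SimpleGraph V) (S : Set V) :
    IsPDomSet G (1/2) S ↔ Fintype.card V ≤ 2 * (closedNbhd G S).ncard := by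
  unfold IsPDomSet
  rw [← @Nat.cast_le ℝ]
  push_cast
  constructor <;> intro h <;> linarith

lemma pDomNum_half_le {V : Type*} [Fintype V] (G : SimpleGraph V) (S : Set V)
    (h : Fintype.card V ≤ 2 * (closedNbhd G S).ncard) : pDomNum G (1/2) ≤ S.ncard :=
  Nat.sInf_le ⟨S, (isPDomSet_half_iff G S).2 h, rfl⟩

lemma exists_half_dom {V : Type*} [Fintype V] (G : SimpleGraph V) :
    ∃ S : Set V, Fintype.card V ≤ 2 * (closedNbhd G S).ncard ∧ S.ncard = pDomNum G (1/2) := by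
  have hne : {k : ℕ | ∃ S : Set V, IsPDomSet G (1/2) S ∧ S.ncard = k}.Nonempty := by
    refine ⟨_, Set.univ, (isPDomSet_half_iff G _).2 ?_, rfl⟩
    have : closedNbhd G Set.univ = Set.univ :=
      Set.eq_univ_of_forall fun w => ⟨w, Set.mem_univ w, Or.inl rfl⟩
    rw [this, Set.ncard_univ, Nat.card_eq_fintype_card]
    omega
  obtain ⟨S, h1, h2⟩ := Nat.sInf_mem hne
  exact ⟨S, (isPDomSet_half_iff G S).1 h1, h2⟩

lemma two_mul_nbhd_add_three_le {V : Type*} [Fintype V] (G : SimpleGraph V)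
    (hG : pDomNum G (1/2) = 3) (u : V) :
    2 * (closedNbhd G {u}).ncard + 3 ≤ Fintype.card V := by
  have hex : ∃ v, v ∉ closedNbhd G {u} := by
    by_contra! h
    have hu := pDomNum_half_le G {u} (by
      rw [Set.eq_univ_of_forall h, Set.ncard_univ, Nat.card_eq_fintype_card]
      omega)
    rw [Set.ncard_singleton] at hu
    omega
  obtain ⟨v, hv⟩ := hex
  have hpair : 2 * (closedNbhd G {u, v}).ncard < Fintype.card V := by
    by_contra! h
    have h1 := pDomNum_half_le G {u, v} h
    have h2 := Set.ncard_insert_le u {v}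
    rw [Set.ncard_singleton] at h2
    omega
  have hsub : insert v (closedNbhd G {u}) ⊆ closedNbhd G {u, v} := by
    rintro w (rfl | ⟨x, hx, hw⟩)
    · exact ⟨w, by simp, Or.inl rfl⟩
    · exact ⟨x, by simp [Set.mem_singleton_iff.1 hx], hw⟩
  have h1 := Set.ncard_le_ncard hsub (Set.toFinite _)
  rw [Set.ncard_insert_of_notMem hv (Set.toFinite _)] at h1
  omega

lemma ncard_closedNbhd_le_mul {V : Type*} [Fintype V] (G : SimpleGraph V) (S : Set V) (b : ℕ)
    (hb : ∀ u, (closedNbhd G {u}).ncard ≤ b) : (closedNbhd G S).ncard ≤ S.ncard * b := by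
  classical
  have h : closedNbhd G S ⊆
      ((Set.toFinite S).toFinset.biUnion fun u => (closedNbhd G {u}).toFinset : Finset V) := by
    rintro w ⟨u, hu, hw⟩
    simp only [Finset.coe_biUnion, Set.mem_iUnion]
    exact ⟨u, by simpa using hu, by simpa using ⟨u, rfl, hw⟩⟩
  refine (Set.ncard_le_ncard h (Set.toFinite _)).trans ?_
  rw [Set.ncard_coe_finset, Set.ncard_eq_toFinset_card S (Set.toFinite S)]
  refine Finset.card_biUnion_le_card_mul _ _ _ fun u _ => ?_
  rw [← Set.ncard_eq_toFinset_card']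
  exact hb u

lemma ncard_closedNbhd_boxProd_le {V W : Type*} [Fintype V] [Fintype W]
    (G : SimpleGraph V) (H : SimpleGraph W) (u : V) (i : W) :
    (closedNbhd (G □ H) {(u, i)}).ncard ≤
      (closedNbhd G {u}).ncard + (H.neighborSet i).ncard := by
  have h : closedNbhd (G □ H) {(u, i)} ⊆
      (fun w => (w, i)) '' closedNbhd G {u} ∪ (fun j => (u, j)) '' H.neighborSet i := by
    rintro ⟨w, j⟩ ⟨x, rfl, hw⟩
    rcases hw with hw | hw
    · obtain ⟨rfl, rfl⟩ := Prod.mk.inj hw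
      exact Or.inl ⟨w, ⟨w, rfl, Or.inl rfl⟩, rfl⟩
    · rcases SimpleGraph.boxProd_adj.1 hw with ⟨h1, h2⟩ | ⟨h1, h2⟩
      · dsimp at h1 h2
        subst h2
        exact Or.inl ⟨w, ⟨u, rfl, Or.inr h1⟩, rfl⟩
      · dsimp at h1 h2
        subst h2
        exact Or.inr ⟨j, h1, rfl⟩
  calc _ ≤ _ := Set.ncard_le_ncard h (Set.toFinite _)
    _ ≤ _ := Set.ncard_union_le _ _
    _ ≤ _ := Nat.add_le_add (Set.ncard_image_le (Set.toFinite _))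
        (Set.ncard_image_le (Set.toFinite _))

lemma ncard_neighborSet_pathGraph_le (m : ℕ) (i : Fin m) :
    ((pathGraph m).neighborSet i).ncard ≤ 2 := by
  rw [← Set.ncard_image_of_injective _ Fin.val_injective]
  refine (Set.ncard_le_ncard (t := {i.val - 1, i.val + 1}) ?_ (Set.toFinite _)).trans
    ((Set.ncard_insert_le _ _).trans (by rw [Set.ncard_singleton]))
  rintro _ ⟨j, hj, rfl⟩
  rw [SimpleGraph.mem_neighborSet, SimpleGraph.pathGraph_adj] at hj
  simp only [Set.mem_insert_iff, Set.mem_singleton_iff]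
  omega

lemma ncard_neighborSet_pathGraph_two_le (i : Fin 2) :
    ((pathGraph 2).neighborSet i).ncard ≤ 1 := by
  rw [← Set.ncard_image_of_injective _ Fin.val_injective]
  refine (Set.ncard_le_ncard (t := {1 - i.val}) ?_ (Set.toFinite _)).trans
    (Set.ncard_singleton _).le
  rintro _ ⟨j, hj, rfl⟩
  rw [SimpleGraph.mem_neighborSet, SimpleGraph.pathGraph_adj] at hj
  simp only [Set.mem_singleton_iff]
  omega

/-- The `k = ⌈m / 6⌉` vertices `1, 4, 7, …` dominate the first `min (3 k) m` vertices of the path,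
which is at least half of them. -/
lemma pDomNum_pathGraph_le (m : ℕ) (hm : 2 ≤ m) :
    pDomNum (pathGraph m) (1/2) ≤ (m + 5) / 6 := by
  classical
  set k := (m + 5) / 6 with hk
  -- The cap `m - 1` only makes `f` total: for `j < k` one has `3 j + 1 ≤ m - 1`.
  let f : ℕ → Fin m := fun j => ⟨min (3 * j + 1) (m - 1), by omega⟩
  let S : Finset (Fin m) := (Finset.range k).image f
  have hS : (S : Set (Fin m)).ncard ≤ k := by
    rw [Set.ncard_coe_finset]
    exact Finset.card_image_le.trans (Finset.card_range k).le
  refine (pDomNum_half_le _ (S : Set (Fin m)) ?_).trans hS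
  have hsub : ((Finset.range (min (3 * k) m) : Finset ℕ) : Set ℕ) ⊆
      Fin.val '' closedNbhd (pathGraph m) (S : Set (Fin m)) := by
    intro i hi
    have hi' : i < min (3 * k) m := by simpa using hi
    refine ⟨⟨i, by omega⟩, ⟨f (i / 3), ?_, ?_⟩, rfl⟩
    · exact Finset.mem_coe.2 (Finset.mem_image_of_mem f (Finset.mem_range.2 (by omega)))
    · rw [SimpleGraph.pathGraph_adj, Fin.ext_iff]
      simp only [f]
      omega
  have h := Set.ncard_le_ncard hsub (Set.toFinite _)
  rw [Set.ncard_coe_finset, Finset.card_range,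
    Set.ncard_image_of_injective _ Fin.val_injective] at h
  rw [Fintype.card_fin]
  omega

theorem stmt6 {V : Type*} [Fintype V] (G : SimpleGraph V) (hconn : G.Connected)
    (hG : pDomNum G (1/2) = 3) (m : ℕ) (hm : 2 ≤ m) :
    3 * pDomNum (pathGraph m) (1/2) ≤ pDomNum (G □ pathGraph m) (1/2) := by
  obtain ⟨S, hS, hs⟩ := exists_half_dom (G □ pathGraph m)
  rw [← hs]
  have hpath := pDomNum_pathGraph_le m hm
  have hN := two_mul_nbhd_add_three_le G hG
  rw [Fintype.card_prod, Fintype.card_fin] at hS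
  set n := Fintype.card V
  have hn : 5 ≤ n := by
    obtain ⟨u⟩ := hconn.nonempty
    have h1 : 0 < (closedNbhd G {u}).ncard :=
      (Set.ncard_pos (Set.toFinite _)).2 ⟨u, u, rfl, Or.inl rfl⟩
    have := hN u
    omega
  suffices h : 3 * ((m + 5) / 6) ≤ S.ncard by omega
  by_contra! hlt
  obtain rfl | hm3 : m = 2 ∨ 3 ≤ m := by omega
  · have hb := ncard_closedNbhd_le_mul (G □ pathGraph 2) S ((n - 1) / 2) (by
      rintro ⟨u, i⟩
      have h1 := ncard_closedNbhd_boxProd_le G (pathGraph 2) u i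
      have h2 := ncard_neighborSet_pathGraph_two_le i
      have h3 := hN u
      omega)
    have h2 : S.ncard ≤ 2 := by omega
    have h3 := Nat.mul_le_mul_right ((n - 1) / 2) h2
    omega
  · have hb := ncard_closedNbhd_le_mul (G □ pathGraph m) S ((n + 1) / 2) (by
      rintro ⟨u, i⟩
      have h1 := ncard_closedNbhd_boxProd_le G (pathGraph m) u i
      have h2 := ncard_neighborSet_pathGraph_le m i
      have h3 := hN u
      omega)
    have h2 : 2 * ((n + 1) / 2) ≤ n + 1 := by omega
    have h3 : n * m ≤ S.ncard * (n + 1) := by nlinarith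
    -- With `s ≤ 3 k - 1` and `m ≥ max 3 (6 k - 5)`, the estimate `n m ≤ s (n + 1)` fails for
    -- `n ≥ 5`, because `s < 5 (m - s)`.
    obtain ⟨d, hd⟩ : ∃ d, m = S.ncard + d := ⟨m - S.ncard, by omega⟩
    have h4 : S.ncard < 5 * d := by omega
    have h5 : n * m = n * S.ncard + n * d := by rw [← Nat.mul_add, ← hd]
    nlinarith
end

section
/- Let G be a finite simple graph with at least one vertex, let p ∈ (0,1], and let v be a vertex of maximum degree in G. If v belongs to no γ_p-set of G, then every γ_p-set S of G satisfies |S ∩ N[N[v]]| ≥ 2; that is, S contains at least two vertices at distance at most 2 from v. -/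
/-!
An exchange argument. Suppose a `γ_p`-set `S` has at most one vertex in `N[N[v]]`. Since `p > 0`,
`S` is nonempty, so there is `u ∈ S` with `S ∩ N[N[v]] ⊆ {u}`. Then `N[v]` is disjoint from
`N[S \ {u}]`, and `|N[u]| ≤ |N[v]|` because `v` has maximum degree; hence
`S' = insert v (S \ {u})` satisfies
`|N[S']| = |N[v]| + |N[S \ {u}]| ≥ |N[u]| + |N[S \ {u}]| ≥ |N[S]|`.
As `v ∉ S`, also `|S'| = |S|`, so `S'` is a `γ_p`-set containing `v`, a contradiction.
-/

open SimpleGraph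

lemma closedNbhd_insert {V : Type*} (G : SimpleGraph V) (a : V) (S : Set V) :
    closedNbhd G (insert a S) = closedNbhd G {a} ∪ closedNbhd G S := by
  ext w
  simp [closedNbhd]

lemma ncard_closedNbhd_singleton {V : Type*} [Fintype V] (G : SimpleGraph V) (a : V) :
    (closedNbhd G {a}).ncard = (G.neighborSet a).ncard + 1 := by
  have h : closedNbhd G {a} = insert a (G.neighborSet a) := by
    ext w
    simp [closedNbhd]
  rw [h, Set.ncard_insert_of_notMem (by simp) (Set.toFinite _)]

theorem stmt8 {V : Type*} [Fintype V] [Nonempty V] (G : SimpleGraph V)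
    (p : ℝ) (hp0 : 0 < p) (hp1 : p ≤ 1) (v : V)
    (hv : ∀ u : V, (G.neighborSet u).ncard ≤ (G.neighborSet v).ncard)
    (hnot : ∀ S : Set V, IsGammaPSet G p S → v ∉ S) :
    ∀ S : Set V, IsGammaPSet G p S →
      2 ≤ (S ∩ closedNbhd G (closedNbhd G {v})).ncard := by
  intro S hS
  have hvS := hnot S hS
  by_contra! hlt
  have hne : S.Nonempty := by
    rw [Set.nonempty_iff_ne_empty]
    rintro rfl
    have h1 := hS.1
    have h2 : (0 : ℝ) < Fintype.card V := by exact_mod_cast Fintype.card_pos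
    have h3 : 0 < p * (Fintype.card V : ℝ) := by positivity
    simp only [IsPDomSet, closedNbhd, Set.mem_empty_iff_false, false_and, exists_false,
      Set.ofPred_false, Set.ncard_empty, Nat.cast_zero] at h1
    linarith
  obtain ⟨u, huS, hu⟩ : ∃ u ∈ S, ∀ x ∈ S, x ∈ closedNbhd G (closedNbhd G {v}) → x = u := by
    by_cases h : ∃ u, u ∈ S ∩ closedNbhd G (closedNbhd G {v})
    · obtain ⟨u, hu⟩ := h
      exact ⟨u, hu.1, fun x hx hx2 =>
        (Set.ncard_le_one (Set.toFinite _)).1 (Nat.lt_succ_iff.1 hlt) x ⟨hx, hx2⟩ u hu⟩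
    · obtain ⟨u, hu⟩ := hne
      exact ⟨u, hu, fun x hx hx2 => absurd ⟨x, hx, hx2⟩ h⟩
  have hdisj : Disjoint (closedNbhd G {v}) (closedNbhd G (S \ {u})) := by
    rw [Set.disjoint_left]
    rintro w hw ⟨x, ⟨hxS, hxu⟩, hxw⟩
    exact hxu (hu x hxS ⟨w, hw, hxw.imp Eq.symm fun h => h.symm⟩)
  have hle : (closedNbhd G S).ncard ≤ (closedNbhd G (insert v (S \ {u}))).ncard := by
    calc (closedNbhd G S).ncard
        = (closedNbhd G {u} ∪ closedNbhd G (S \ {u})).ncard := by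
          rw [← closedNbhd_insert, Set.insert_sdiff_singleton, Set.insert_eq_of_mem huS]
      _ ≤ (closedNbhd G {u}).ncard + (closedNbhd G (S \ {u})).ncard := Set.ncard_union_le _ _
      _ ≤ (closedNbhd G {v}).ncard + (closedNbhd G (S \ {u})).ncard := by
          simp only [ncard_closedNbhd_singleton]
          have := hv u
          omega
      _ = (closedNbhd G (insert v (S \ {u}))).ncard := by
          rw [closedNbhd_insert, Set.ncard_union_eq hdisj (Set.toFinite _) (Set.toFinite _)]
  refine hnot (insert v (S \ {u})) ⟨?_, ?_⟩ (Set.mem_insert _ _)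
  · exact hS.1.trans (by exact_mod_cast hle)
  · rw [Set.ncard_insert_of_notMem (fun h => hvS h.1) (Set.toFinite _),
      Set.ncard_sdiff_singleton_add_one huS (Set.toFinite _), hS.2]
end

section
/- Let G be a finite simple graph on n ≥ 1 vertices with minimum degree δ(G). If p is a real number with 0 < p ≤ (δ(G)+1)/n, then the p-influencing set of G is the entire vertex set V; that is, every vertex of G belongs to some γ_p-set. -/
/-! A singleton `{v}` has closed neighborhood of size `deg v + 1 ≥ δ(G) + 1 ≥ p * n`, so it is
`p`-dominating. As `p * n > 0`, the empty set is not, hence `γ_p(G) = 1` and every singleton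
is a `γ_p`-set. -/

open SimpleGraph

lemma closedNbhd_singleton {V : Type*} (G : SimpleGraph V) (v : V) :
    closedNbhd G {v} = insert v (G.neighborSet v) := by
  ext w
  simp [closedNbhd]

lemma isPDomSet_singleton {V : Type*} [Fintype V] [Nonempty V] (G : SimpleGraph V) (p : ℝ)
    (hp : p ≤ ((Finset.univ.inf' Finset.univ_nonempty
        (fun v : V => (G.neighborSet v).ncard) : ℕ) + 1) / (Fintype.card V : ℝ)) (v : V) :
    IsPDomSet G p {v} := by
  have hn : (0 : ℝ) < Fintype.card V := by exact_mod_cast Fintype.card_pos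
  rw [le_div_iff₀ hn] at hp
  have hmin : Finset.univ.inf' Finset.univ_nonempty
      (fun v : V => (G.neighborSet v).ncard) ≤ (G.neighborSet v).ncard :=
    Finset.inf'_le (fun v : V => (G.neighborSet v).ncard) (Finset.mem_univ v)
  rw [IsPDomSet, closedNbhd_singleton, Set.ncard_insert_of_notMem (by simp) (Set.toFinite _)]
  refine hp.trans ?_
  exact_mod_cast Nat.succ_le_succ hmin

lemma IsPDomSet.one_le_ncard {V : Type*} [Fintype V] [Nonempty V] {G : SimpleGraph V} {p : ℝ}
    (hp0 : 0 < p) {S : Set V} (hS : IsPDomSet G p S) : 1 ≤ S.ncard := by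
  have hn : (0 : ℝ) < Fintype.card V := by exact_mod_cast Fintype.card_pos
  rw [Nat.one_le_iff_ne_zero]
  intro h0
  rw [Set.ncard_eq_zero (Set.toFinite _)] at h0
  subst h0
  have hpos := mul_pos hp0 hn
  simp only [IsPDomSet, closedNbhd, Set.mem_empty_iff_false, false_and, exists_false,
    Set.ofPred_false, Set.ncard_empty, Nat.cast_zero] at hS
  linarith

theorem stmt11 {V : Type*} [Fintype V] [Nonempty V] (G : SimpleGraph V)
    (p : ℝ) (hp0 : 0 < p)
    (hp : p ≤ ((Finset.univ.inf' Finset.univ_nonempty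
        (fun v : V => (G.neighborSet v).ncard) : ℕ) + 1) / (Fintype.card V : ℝ)) :
    ∀ v : V, InInfluence G p v := by
  intro v
  have hv := isPDomSet_singleton G p hp v
  refine ⟨{v}, ⟨hv, ?_⟩, rfl⟩
  rw [Set.ncard_singleton]
  apply le_antisymm
  · refine le_csInf ⟨_, {v}, hv, rfl⟩ ?_
    rintro k ⟨S, hS, rfl⟩
    exact hS.one_le_ncard hp0
  · exact Nat.sInf_le ⟨{v}, hv, Set.ncard_singleton v⟩
end

section
/- Let P_n be the path with vertices v_1, …, v_n (v_i adjacent to v_{i+1}), where n ≥ 3 and n ≡ 0 (mod 3). Then: (i) for every integer k ≥ 0 with (3k+1)/n ≤ 1, the p-influencing set of P_n for p = (3k+1)/n and for p = (3k+2)/n (when (3k+2)/n ≤ 1) is the whole vertex set {v_1, …, v_n}; (ii) for every integer k ≥ 1 with 3k < n, the p-influencing set of P_n for p = 3k/n is {v_2, v_3, …, v_{n−1}}; and (iii) for p = 1, the p-influencing set of P_n is {v_2, v_5, v_8, …, v_{n−1}} (the vertices v_i with i ≡ 2 (mod 3)). -/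
/-!
On a path every vertex dominates at most three vertices, and an endpoint only two. Hence a set
of size `t` dominates at most `3 * t` vertices, and strictly fewer as soon as it contains an
endpoint or two vertices at distance at most two (`ncard_closedNbhd_lt`). In particular, for
`p = q / n` a `p`-dominating set with fewer than `q / 3 + 1` elements has minimum cardinality.

Conversely, vertices whose indices agree modulo 3 have disjoint closed neighborhoods, so `t`
interior vertices from one residue class dominate exactly `3 * t` vertices. Each residue class
contains `n / 3` vertices and at most one endpoint, so at least `3 * t - 1` vertices are dominated
by any `t` vertices of a class. For `q` equal to `3 * k + 1` or `3 * k + 2`, any `k + 1` vertices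
of a class therefore form a `γ_p`-set; for `q = 3 * k < n`, any `k` interior vertices of a class
do, and the strict bound rules out endpoints.

For `p = 1` the strict bound shows that a `γ_p`-set contains no endpoint and no two vertices at
distance at most two. Reading the path from left to right, domination then forces the set to be
the class of indices congruent to 1 modulo 3 (`mem_iff_of_perfect`).
-/

open SimpleGraph

/-! ### Closed neighborhoods in paths -/

lemma mem_closedNbhd_path {n : ℕ} {S : Set (Fin n)} {w : Fin n} :
    w ∈ closedNbhd (pathGraph n) S ↔ ∃ u ∈ S, w.val ≤ u.val + 1 ∧ u.val ≤ w.val + 1 := by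
  unfold closedNbhd
  simp only [Set.mem_ofPred_eq]
  refine exists_congr fun u => and_congr_right fun _ => ?_
  rw [pathGraph_adj, Fin.ext_iff]
  omega

lemma closedNbhd_insert_s16 {n : ℕ} (u : Fin n) (S : Set (Fin n)) :
    closedNbhd (pathGraph n) (insert u S) =
      closedNbhd (pathGraph n) {u} ∪ closedNbhd (pathGraph n) S := by
  ext w
  simp [mem_closedNbhd_path, or_and_right, exists_or]

/-- A set of vertices of the path has at most as many elements as any finite set of naturals
containing all its indices. -/
lemma ncard_le_of_val {n : ℕ} (A : Set (Fin n)) (B : Finset ℕ) (h : ∀ w ∈ A, w.val ∈ B) :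
    A.ncard ≤ B.card := by
  rw [← Set.ncard_coe_finset]
  exact Set.ncard_le_ncard_of_injOn Fin.val (fun w hw => h w hw)
    (fun _ _ _ _ hab => Fin.ext hab) (Finset.finite_toSet B)

/-- A set of vertices of the path has at least as many elements as any finite set of naturals
all of whose elements are indices of its members. -/
lemma le_ncard_of_val {n : ℕ} (A : Set (Fin n)) (B : Finset ℕ)
    (h : ∀ i ∈ B, ∃ w ∈ A, w.val = i) : B.card ≤ A.ncard := by
  rw [← Set.ncard_image_of_injective A Fin.val_injective, ← Set.ncard_coe_finset]
  exact Set.ncard_le_ncard (fun i hi => h i hi) (Set.toFinite _)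

lemma ncard_closedNbhd_singleton_le {n : ℕ} (u : Fin n) :
    (closedNbhd (pathGraph n) {u}).ncard ≤ 3 := by
  refine (ncard_le_of_val _ {u.val - 1, u.val, u.val + 1} ?_).trans Finset.card_le_three
  intro w hw
  simp [mem_closedNbhd_path] at hw
  simp
  omega

/-! ### Upper bounds on the number of dominated vertices -/

lemma ncard_closedNbhd_le {n : ℕ} (S : Set (Fin n)) :
    (closedNbhd (pathGraph n) S).ncard ≤ 3 * S.ncard := by
  induction S, Set.toFinite S using Set.Finite.induction_on with
  | empty => simp [closedNbhd]
  | @insert u S hu hS ih =>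
    rw [closedNbhd_insert_s16, Set.ncard_insert_of_notMem hu hS]
    have h1 := Set.ncard_union_le (closedNbhd (pathGraph n) {u}) (closedNbhd (pathGraph n) S)
    have h2 := ncard_closedNbhd_singleton_le u
    omega

/-- An element `u` of `S` that contributes at most the two indices `a`, `b` to `N[S]` makes the
bound `|N[S]| ≤ 3|S|` strict. -/
lemma ncard_closedNbhd_lt {n : ℕ} (S : Set (Fin n)) (u : Fin n) (hu : u ∈ S) (a b : ℕ)
    (h : ∀ w : Fin n, w.val ≤ u.val + 1 → u.val ≤ w.val + 1 →
      w.val = a ∨ w.val = b ∨ w ∈ closedNbhd (pathGraph n) (S \ {u})) :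
    (closedNbhd (pathGraph n) S).ncard < 3 * S.ncard := by
  have hsub : closedNbhd (pathGraph n) S ⊆
      {w : Fin n | w.val = a ∨ w.val = b} ∪ closedNbhd (pathGraph n) (S \ {u}) := by
    intro w hw
    obtain ⟨x, hx, h1, h2⟩ := mem_closedNbhd_path.1 hw
    by_cases hxu : x = u
    · subst hxu
      rcases h w h1 h2 with h | h | h
      · exact Or.inl (Or.inl h)
      · exact Or.inl (Or.inr h)
      · exact Or.inr h
    · exact Or.inr (mem_closedNbhd_path.2 ⟨x, ⟨hx, hxu⟩, h1, h2⟩)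
  have h1 := Set.ncard_le_ncard hsub (Set.toFinite _)
  have h2 := Set.ncard_union_le {w : Fin n | w.val = a ∨ w.val = b}
    (closedNbhd (pathGraph n) (S \ {u}))
  have h3 : {w : Fin n | w.val = a ∨ w.val = b}.ncard ≤ 2 :=
    (ncard_le_of_val _ {a, b} (by simp)).trans Finset.card_le_two
  have h4 := ncard_closedNbhd_le (S \ {u})
  have h5 := Set.ncard_sdiff_singleton_add_one hu (Set.toFinite S)
  omega

lemma ncard_closedNbhd_lt_of_endpoint {n : ℕ} (S : Set (Fin n)) (u : Fin n) (hu : u ∈ S)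
    (he : u.val = 0 ∨ u.val = n - 1) :
    (closedNbhd (pathGraph n) S).ncard < 3 * S.ncard := by
  rcases he with he | he
  · exact ncard_closedNbhd_lt S u hu 0 1 fun w _ _ => by omega
  · exact ncard_closedNbhd_lt S u hu (n - 1) (n - 2) fun w _ _ => by omega

lemma ncard_closedNbhd_lt_of_close {n : ℕ} (S : Set (Fin n)) (u x : Fin n) (hu : u ∈ S)
    (hx : x ∈ S) (h1 : x.val < u.val) (h2 : u.val ≤ x.val + 2) :
    (closedNbhd (pathGraph n) S).ncard < 3 * S.ncard := by
  -- The neighbor `u - 1` is also dominated by `x`.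
  refine ncard_closedNbhd_lt S u hu u.val (u.val + 1) fun w hw1 hw2 => ?_
  by_cases hw : w.val + 1 = u.val
  · refine Or.inr (Or.inr (mem_closedNbhd_path.2 ⟨x, ⟨hx, ?_⟩, by omega, by omega⟩))
    rintro rfl
    omega
  · omega

/-! ### Lower bounds for subsets of a residue class modulo 3 -/

lemma disjoint_closedNbhd {n r : ℕ} (u : Fin n) (S : Set (Fin n)) (hu : u ∉ S)
    (hur : u.val % 3 = r) (hS : ∀ x ∈ S, x.val % 3 = r) :
    Disjoint (closedNbhd (pathGraph n) {u}) (closedNbhd (pathGraph n) S) := by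
  rw [Set.disjoint_left]
  intro w hw hw'
  simp only [mem_closedNbhd_path, Set.mem_singleton_iff, exists_eq_left] at hw
  obtain ⟨x, hx, h1, h2⟩ := mem_closedNbhd_path.1 hw'
  have := hS x hx
  have hxu : x.val = u.val := by omega
  exact hu (Fin.ext hxu ▸ hx)

lemma le_ncard_of_interior {n r : ℕ} (S : Set (Fin n))
    (hS : ∀ x ∈ S, x.val % 3 = r ∧ 1 ≤ x.val ∧ x.val + 2 ≤ n) :
    3 * S.ncard ≤ (closedNbhd (pathGraph n) S).ncard := by
  induction S, Set.toFinite S using Set.Finite.induction_on with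
  | empty => simp
  | @insert u S hu hfin ih =>
    have hS' := fun x hx => hS x (Set.mem_insert_of_mem u hx)
    obtain ⟨hur, hu1, hu2⟩ := hS u (Set.mem_insert u S)
    rw [closedNbhd_insert_s16, Set.ncard_insert_of_notMem hu hfin, Set.ncard_union_eq
      (disjoint_closedNbhd u S hu hur fun x hx => (hS' x hx).1) (Set.toFinite _) (Set.toFinite _)]
    have h1 := ih hS'
    have h2 : ({u.val - 1, u.val, u.val + 1} : Finset ℕ).card ≤
        (closedNbhd (pathGraph n) {u}).ncard := by
      refine le_ncard_of_val _ _ fun i hi => ?_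
      simp only [Finset.mem_insert, Finset.mem_singleton] at hi
      refine ⟨⟨i, by omega⟩, mem_closedNbhd_path.2 ⟨u, rfl, ?_, ?_⟩, rfl⟩ <;> simp only <;> omega
    rw [Finset.card_eq_three.2 ⟨u.val - 1, u.val, u.val + 1, by omega, by omega, by omega, rfl⟩]
      at h2
    omega

/-- A subset of a residue class misses the bound `3|S|` by at most one, because (for `3 ∣ n`) a
class contains at most one of the two endpoints. -/
lemma le_ncard_of_class {n r : ℕ} (hn : 3 ≤ n) (hmod : n % 3 = 0) (S : Set (Fin n))
    (hS : ∀ x ∈ S, x.val % 3 = r) :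
    3 * S.ncard ≤ (closedNbhd (pathGraph n) S).ncard + 1 := by
  by_cases h : ∃ e ∈ S, e.val = 0 ∨ e.val = n - 1
  · obtain ⟨e, he, hend⟩ := h
    have her := hS e he
    have hr := fun x (hx : x ∈ S \ {e}) => hS x hx.1
    have hint : 3 * (S \ {e}).ncard ≤ (closedNbhd (pathGraph n) (S \ {e})).ncard := by
      refine le_ncard_of_interior (r := r) _ fun x hx => ?_
      have h1 := hr x hx
      have h2 : x.val ≠ e.val := fun h => hx.2 (Fin.ext h)
      omega
    have h2 : 2 ≤ (closedNbhd (pathGraph n) {e}).ncard := by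
      obtain ⟨f, hf⟩ : ∃ f : ℕ, f < n ∧ (f + 1 = e.val ∨ f = e.val + 1) := by
        rcases hend with h | h
        · exact ⟨1, by omega⟩
        · exact ⟨n - 2, by omega⟩
      rw [← Finset.card_pair (show e.val ≠ f by omega)]
      refine le_ncard_of_val _ _ fun i hi => ?_
      simp only [Finset.mem_insert, Finset.mem_singleton] at hi
      refine ⟨⟨i, by omega⟩, mem_closedNbhd_path.2 ⟨e, rfl, ?_, ?_⟩, rfl⟩ <;> simp only <;> omega
    have h3 := Set.ncard_union_eq (disjoint_closedNbhd e (S \ {e}) (by simp) her hr)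
      (Set.toFinite _) (Set.toFinite _)
    rw [← closedNbhd_insert_s16, Set.insert_sdiff_singleton, Set.insert_eq_of_mem he] at h3
    have h5 := Set.ncard_sdiff_singleton_add_one he (Set.toFinite S)
    omega
  · push Not at h
    have := le_ncard_of_interior (r := r) S fun x hx => by
      have := h x hx
      have := hS x hx
      omega
    omega

/-- If `m` indices `3j + c`, `j < m`, all belong to `A`, then every `v ∈ A` lies in a subset of
`A` of any prescribed size between `1` and `m`. -/
lemma exists_subset_card {n : ℕ} (A : Set (Fin n)) (v : Fin n) (hv : v ∈ A) (m c t : ℕ)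
    (hA : ∀ j < m, ∃ w ∈ A, w.val = 3 * j + c) (ht : 1 ≤ t) (htm : t ≤ m) :
    ∃ S ⊆ A, v ∈ S ∧ S.ncard = t := by
  have hcard : m ≤ A.ncard := by
    have h := le_ncard_of_val A ((Finset.range m).image fun j => 3 * j + c) (by
      intro i hi
      obtain ⟨j, hj, rfl⟩ := Finset.mem_image.1 hi
      exact hA j (Finset.mem_range.1 hj))
    rwa [Finset.card_image_of_injective _ (fun a b (h : 3 * a + c = 3 * b + c) => by omega),
      Finset.card_range] at h
  obtain ⟨S, h1, h2, h3⟩ := Set.exists_subsuperset_card_eq (Set.singleton_subset_iff.2 hv)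
    (by simpa using ht) (htm.trans hcard)
  exact ⟨S, h2, h1 rfl, h3⟩

/-! ### Minimum `p`-dominating sets -/

lemma isPDomSet_iff {n q : ℕ} (hn : 0 < n) (S : Set (Fin n)) :
    IsPDomSet (pathGraph n) ((q : ℝ) / n) S ↔ q ≤ (closedNbhd (pathGraph n) S).ncard := by
  unfold IsPDomSet
  rw [Fintype.card_fin, div_mul_cancel₀ _ (by positivity), Nat.cast_le]

lemma isGammaPSet_of {n q : ℕ} (hn : 0 < n) (S : Set (Fin n))
    (h1 : q ≤ (closedNbhd (pathGraph n) S).ncard) (h2 : 3 * S.ncard < q + 3) :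
    IsGammaPSet (pathGraph n) ((q : ℝ) / n) S := by
  have hS := (isPDomSet_iff hn S).2 h1
  refine ⟨hS, le_antisymm ?_ (Nat.sInf_le ⟨S, hS, rfl⟩)⟩
  refine le_csInf ⟨_, S, hS, rfl⟩ ?_
  rintro _ ⟨T, hT, rfl⟩
  have := (isPDomSet_iff hn T).1 hT
  have := ncard_closedNbhd_le T
  omega

lemma IsGammaPSet.le_of {n q : ℕ} (hn : 0 < n) {S : Set (Fin n)}
    (hS : IsGammaPSet (pathGraph n) ((q : ℝ) / n) S) (T : Set (Fin n))
    (h1 : q ≤ (closedNbhd (pathGraph n) T).ncard) : S.ncard ≤ T.ncard :=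
  hS.2.le.trans (Nat.sInf_le ⟨T, (isPDomSet_iff hn T).2 h1, rfl⟩)

lemma inInfluence_of_not_dvd {n : ℕ} (hn : 3 ≤ n) (hmod : n % 3 = 0) (k q : ℕ)
    (hq : q = 3 * k + 1 ∨ q = 3 * k + 2) (hqn : q ≤ n) (v : Fin n) :
    InInfluence (pathGraph n) ((q : ℝ) / n) v := by
  obtain ⟨S, hSA, hvS, hS⟩ := exists_subset_card {w : Fin n | w.val % 3 = v.val % 3} v rfl
    (n / 3) (v.val % 3) (k + 1)
    (fun j hj => ⟨⟨3 * j + v.val % 3, by omega⟩, by simp, rfl⟩) (by omega) (by omega)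
  have := le_ncard_of_class hn hmod S hSA
  exact ⟨S, isGammaPSet_of (by omega) S (by omega) (by omega), hvS⟩

/-- Every interior vertex lies in a set of `k` vertices dominating at least `3k` vertices. -/
lemma exists_interior {n : ℕ} (hmod : n % 3 = 0) (k : ℕ) (hk : 1 ≤ k) (hkn : 3 * k < n)
    (v : Fin n) (hv : 1 ≤ v.val ∧ v.val ≤ n - 2) :
    ∃ S : Set (Fin n), v ∈ S ∧ S.ncard = k ∧
      3 * k ≤ (closedNbhd (pathGraph n) S).ncard := by
  -- In the class of 0 the index 0 is skipped, so the progression starts at 3.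
  obtain ⟨S, hSA, hvS, hS⟩ := exists_subset_card
    {w : Fin n | w.val % 3 = v.val % 3 ∧ 1 ≤ w.val ∧ w.val + 2 ≤ n} v
    ⟨rfl, by omega, by omega⟩ (n / 3 - 1) (if v.val % 3 = 0 then 3 else v.val % 3) k
    (fun j hj => by
      split_ifs with h
      · exact ⟨⟨3 * j + 3, by omega⟩, ⟨by simp only; omega, by simp, by simp only; omega⟩, rfl⟩
      · exact ⟨⟨3 * j + v.val % 3, by omega⟩,
          ⟨by simp, by simp only; omega, by simp only; omega⟩, rfl⟩)
    hk (by omega)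
  have := le_ncard_of_interior S hSA
  exact ⟨S, hvS, hS, by omega⟩

/-- The `n / 3` indices congruent to 1 modulo 3 dominate the whole path. -/
lemma exists_perfect {n : ℕ} (hn : 3 ≤ n) (hmod : n % 3 = 0) :
    3 * {w : Fin n | w.val % 3 = 1}.ncard = n ∧
      n ≤ (closedNbhd (pathGraph n) {w : Fin n | w.val % 3 = 1}).ncard := by
  have h1 := le_ncard_of_interior (n := n) (r := 1) {w : Fin n | w.val % 3 = 1}
    fun x (hx : x.val % 3 = 1) => by omega
  have h2 := Set.ncard_le_card (closedNbhd (pathGraph n) {w : Fin n | w.val % 3 = 1})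
  obtain ⟨S, hSA, -, hS⟩ := exists_subset_card {w : Fin n | w.val % 3 = 1} ⟨1, by omega⟩ rfl
    (n / 3) 1 (n / 3)
    (fun j hj => ⟨⟨3 * j + 1, by omega⟩, by simp, rfl⟩) (by omega) (by omega)
  have h3 := Set.ncard_le_ncard hSA (Set.toFinite _)
  simp only [Nat.card_eq_fintype_card, Fintype.card_fin] at h2
  omega

/-- A dominating set of size `n / 3` consists of the indices congruent to 1 modulo 3. -/
lemma mem_iff_of_perfect {n : ℕ} (hmod : n % 3 = 0) (S : Set (Fin n))
    (hS : 3 * S.ncard ≤ n) (hN : n ≤ (closedNbhd (pathGraph n) S).ncard) (i : ℕ) :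
    ∀ hi : i < n, (⟨i, hi⟩ : Fin n) ∈ S ↔ i % 3 = 1 := by
  have hall : closedNbhd (pathGraph n) S = Set.univ :=
    Set.eq_of_subset_of_ncard_le (Set.subset_univ _) (by simpa [Set.ncard_univ] using hN)
  induction i using Nat.strong_induction_on with
  | _ i ih =>
    intro hi
    constructor
    · intro hmem
      by_contra hne
      have key : (closedNbhd (pathGraph n) S).ncard < 3 * S.ncard := by
        by_cases h0 : i = 0
        · exact ncard_closedNbhd_lt_of_endpoint S _ hmem (Or.inl h0)
        -- The nearest smaller index congruent to 1 is at distance 1 or 2 and lies in `S`.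
        · obtain ⟨j, hj, hj'⟩ : ∃ j < i, i ≤ j + 2 ∧ j % 3 = 1 := by
            by_cases h2 : i % 3 = 2
            · exact ⟨i - 1, by omega⟩
            · exact ⟨i - 2, by omega⟩
          exact ncard_closedNbhd_lt_of_close S _ ⟨j, by omega⟩ hmem
            ((ih j hj (by omega)).2 hj'.2) hj hj'.1
      omega
    · intro h1
      -- The index `i - 1` can only be dominated by `i`.
      have hw : (⟨i - 1, by omega⟩ : Fin n) ∈ closedNbhd (pathGraph n) S := hall ▸ Set.mem_univ _
      obtain ⟨u, hu, hu1, hu2⟩ := mem_closedNbhd_path.1 hw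
      simp only at hu1 hu2
      rcases lt_or_ge u.val i with hlt | hge
      · have := (ih u.val hlt u.isLt).1 hu
        omega
      · have : u = ⟨i, hi⟩ := Fin.ext (by simp only; omega)
        exact this ▸ hu

/-- For `P_n` with `n ≡ 0 (mod 3)`.  Vertices of `pathGraph n` are `Fin n`,
with `v_i` (1-based) corresponding to the index `i - 1` (0-based). -/
theorem stmt16 (n : ℕ) (hn : 3 ≤ n) (hmod : n % 3 = 0) :
    (∀ k : ℕ, 3 * k + 1 ≤ n →
      ((∀ v : Fin n, InInfluence (pathGraph n) ((3 * k + 1 : ℝ) / (n : ℝ)) v) ∧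
        (3 * k + 2 ≤ n →
          ∀ v : Fin n, InInfluence (pathGraph n) ((3 * k + 2 : ℝ) / (n : ℝ)) v))) ∧
    (∀ k : ℕ, 1 ≤ k → 3 * k < n →
      ∀ v : Fin n, InInfluence (pathGraph n) ((3 * k : ℝ) / (n : ℝ)) v ↔
        1 ≤ v.val ∧ v.val ≤ n - 2) ∧
    (∀ v : Fin n, InInfluence (pathGraph n) 1 v ↔ v.val % 3 = 1) := by
  have hpos : 0 < n := by omega
  refine ⟨fun k hk => ⟨fun v => ?_, fun hk2 v => ?_⟩, fun k hk hkn v => ?_, fun v => ?_⟩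
  · exact_mod_cast inInfluence_of_not_dvd hn hmod k (3 * k + 1) (Or.inl rfl) hk v
  · exact_mod_cast inInfluence_of_not_dvd hn hmod k (3 * k + 2) (Or.inr rfl) hk2 v
  · have hp : (3 * k : ℝ) / (n : ℝ) = ((3 * k : ℕ) : ℝ) / n := by push_cast; rfl
    rw [hp]
    constructor
    · rintro ⟨S, hS, hvS⟩
      by_contra hne
      obtain ⟨T, -, hT, hTN⟩ := exists_interior hmod k hk hkn ⟨1, by omega⟩
        ⟨le_rfl, by simp only; omega⟩
      have h1 := hS.le_of hpos T hTN
      have h2 := (isPDomSet_iff hpos S).1 hS.1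
      have h3 := ncard_closedNbhd_lt_of_endpoint S v hvS (by omega)
      omega
    · intro hv
      obtain ⟨S, hvS, hS, hSN⟩ := exists_interior hmod k hk hkn v hv
      exact ⟨S, isGammaPSet_of hpos S hSN (by omega), hvS⟩
  · have hp : (1 : ℝ) = (n : ℝ) / n := (div_self (by positivity)).symm
    obtain ⟨hc, hN⟩ := exists_perfect hn hmod
    rw [hp]
    constructor
    · rintro ⟨S, hS, hvS⟩
      have h1 := hS.le_of hpos _ hN
      have h2 := (isPDomSet_iff hpos S).1 hS.1
      exact (mem_iff_of_perfect hmod S (by omega) h2 v.val v.isLt).1 hvS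
    · intro hv
      exact ⟨_, isGammaPSet_of hpos _ hN (by omega), hv⟩
end
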